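/- Let A = kQ/I be a gentle algebra and let α ∈ Q₁ be an arrow with sink v lying on an oriented cycle with full relations. Then αA is an indecomposable Gorenstein projective module and the top of αA is isomorphic to the simple module S(v). In particular, if two oriented cycles with full relations α₁⋯α_m and β₁⋯β_n share a common vertex v₀ = t(α_h) = t(β_ħ) = s(α_{h+1}) = s(β_{ħ+1}), then α_h A and β_ħ A are indecomposable Gorenstein projective modules with top(α_h A) ≅ top(β_ħ A) ≅ S(v₀). -/

import Mathlib

open MulOpposite DirectSum

set_option autoImplicit false

/-- The combinatorial data of a finite quiver together with a set of
length-two relations (`rel a b` means that the length-two path `a·b` lies in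
the admissible ideal `I`). -/
structure GentleData : Type 1 where
  V : Type
  A : Type
  [fintypeV : Fintype V]
  [fintypeA : Fintype A]
  [decEqV : DecidableEq V]
  [decEqA : DecidableEq A]
  src : A → V
  tgt : A → V
  rel : A → A → Prop

attribute [instance] GentleData.fintypeV GentleData.fintypeA GentleData.decEqV GentleData.decEqA

/-- The gentleness conditions on a bound quiver `(Q, I)`:
relations are composable length-two paths; at most two arrows start
(resp. end) at every vertex; for every arrow `β` there is at most one arrow `α`
with `αβ ∉ I` and at most one with `αβ ∈ I`, and dually; and there is a bound
on the length of paths avoiding relations (admissibility). -/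
def IsGentle (Q : GentleData) : Prop :=
  (∀ a b, Q.rel a b → Q.tgt a = Q.src b) ∧
  (∀ v : Q.V, Set.ncard {a : Q.A | Q.src a = v} ≤ 2) ∧
  (∀ v : Q.V, Set.ncard {a : Q.A | Q.tgt a = v} ≤ 2) ∧
  (∀ b : Q.A, Set.ncard {a : Q.A | Q.tgt a = Q.src b ∧ ¬ Q.rel a b} ≤ 1) ∧
  (∀ b : Q.A, Set.ncard {a : Q.A | Q.tgt a = Q.src b ∧ Q.rel a b} ≤ 1) ∧
  (∀ a : Q.A, Set.ncard {b : Q.A | Q.src b = Q.tgt a ∧ ¬ Q.rel a b} ≤ 1) ∧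
  (∀ a : Q.A, Set.ncard {b : Q.A | Q.src b = Q.tgt a ∧ Q.rel a b} ≤ 1) ∧
  (∃ N : ℕ, ∀ p : ℕ → Q.A, ¬ ∀ i, i < N → (Q.tgt (p i) = Q.src (p (i+1)) ∧ ¬ Q.rel (p i) (p (i+1))))

/-- Generators of the path algebra: one generator for each vertex (the
corresponding trivial path) and one for each arrow. -/
inductive GenSym (Q : GentleData) : Type
  | vertex : Q.V → GenSym Q
  | arrow : Q.A → GenSym Q

/-- The defining relations of the algebra `kQ/I`: the trivial paths are
orthogonal idempotents summing to `1`, arrows are compatible with the trivial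
paths at their source and target, and the chosen length-two paths vanish. -/
inductive GentleRel (k : Type) [Field k] (Q : GentleData) :
    FreeAlgebra k (GenSym Q) → FreeAlgebra k (GenSym Q) → Prop
  | idem (v : Q.V) : GentleRel k Q
      (FreeAlgebra.ι k (GenSym.vertex v) * FreeAlgebra.ι k (GenSym.vertex v))
      (FreeAlgebra.ι k (GenSym.vertex v))
  | orth (v w : Q.V) (h : v ≠ w) : GentleRel k Q
      (FreeAlgebra.ι k (GenSym.vertex v) * FreeAlgebra.ι k (GenSym.vertex w)) 0
  | sum_idem : GentleRel k Q (∑ v : Q.V, FreeAlgebra.ι k (GenSym.vertex v)) 1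
  | src_mul (a : Q.A) : GentleRel k Q
      (FreeAlgebra.ι k (GenSym.vertex (Q.src a)) * FreeAlgebra.ι k (GenSym.arrow a))
      (FreeAlgebra.ι k (GenSym.arrow a))
  | mul_tgt (a : Q.A) : GentleRel k Q
      (FreeAlgebra.ι k (GenSym.arrow a) * FreeAlgebra.ι k (GenSym.vertex (Q.tgt a)))
      (FreeAlgebra.ι k (GenSym.arrow a))
  | relation (a b : Q.A) (h : Q.rel a b) : GentleRel k Q
      (FreeAlgebra.ι k (GenSym.arrow a) * FreeAlgebra.ι k (GenSym.arrow b)) 0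

/-- The algebra `A = kQ/I` presented by the bound quiver `Q`. -/
abbrev GentleAlgebra (k : Type) [Field k] (Q : GentleData) : Type :=
  RingQuot (GentleRel k Q)

/-- The image in `kQ/I` of a generator. -/
noncomputable def ofGen (k : Type) [Field k] (Q : GentleData) (x : GenSym Q) :
    GentleAlgebra k Q :=
  RingQuot.mkAlgHom k (GentleRel k Q) (FreeAlgebra.ι k x)

/-- The idempotent `e_v ∈ kQ/I` of a vertex `v`. -/
noncomputable def idemOf (k : Type) [Field k] (Q : GentleData) (v : Q.V) :
    GentleAlgebra k Q :=
  ofGen k Q (GenSym.vertex v)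

/-- The element of `kQ/I` given by an arrow `a`. -/
noncomputable def arrOf (k : Type) [Field k] (Q : GentleData) (a : Q.A) :
    GentleAlgebra k Q :=
  ofGen k Q (GenSym.arrow a)

/-- The indecomposable projective right module `e_v A`, as a right submodule
(i.e. `Aᵐᵒᵖ`-submodule) of `A`. -/
noncomputable def vertexModule (k : Type) [Field k] (Q : GentleData) (v : Q.V) :
    Submodule (GentleAlgebra k Q)ᵐᵒᵖ (GentleAlgebra k Q) :=
  Submodule.span (GentleAlgebra k Q)ᵐᵒᵖ {idemOf k Q v}

/-- The right module `αA` generated by an arrow `α`, as a right submodule of `A`. -/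
noncomputable def arrowModule (k : Type) [Field k] (Q : GentleData) (a : Q.A) :
    Submodule (GentleAlgebra k Q)ᵐᵒᵖ (GentleAlgebra k Q) :=
  Submodule.span (GentleAlgebra k Q)ᵐᵒᵖ {arrOf k Q a}

/-- An oriented cycle `c` of length `ℓ` with full relations:
`t(cᵢ) = s(cᵢ₊₁)` and `cᵢ cᵢ₊₁ ∈ I` for all `i` (indices modulo `ℓ`). -/
def IsOCFCycle (Q : GentleData) {ℓ : ℕ} (c : ZMod ℓ → Q.A) : Prop :=
  ∀ i : ZMod ℓ, Q.tgt (c i) = Q.src (c (i + 1)) ∧ Q.rel (c i) (c (i + 1))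

/-- The arrow `a` lies on some oriented cycle with full relations. -/
def OnOCFCycle (Q : GentleData) (a : Q.A) : Prop :=
  ∃ ℓ : ℕ, 1 ≤ ℓ ∧ ∃ c : ZMod ℓ → Q.A, IsOCFCycle Q c ∧ ∃ i : ZMod ℓ, c i = a

/-- The whole quiver `(Q, I)` is an oriented cycle of some length `ℓ ≥ 1` with
full relations. -/
def QuiverIsOCF (Q : GentleData) : Prop :=
  ∃ ℓ : ℕ, 1 ≤ ℓ ∧ ∃ (e : Q.V ≃ ZMod ℓ) (f : Q.A ≃ ZMod ℓ),
    (∀ a, e (Q.src a) = f a) ∧ (∀ a, e (Q.tgt a) = f a + 1) ∧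
    (∀ a b, Q.rel a b ↔ f b = f a + 1)

/-- The quiver `(Q, I)` is a single point: exactly one vertex and no arrows. -/
def QuiverIsPoint (Q : GentleData) : Prop :=
  (∃ v : Q.V, ∀ w : Q.V, w = v) ∧ IsEmpty Q.A

/-- `v` is a common vertex of two distinct oriented cycles with full relations. -/
def TwoCyclesAt (Q : GentleData) (v : Q.V) : Prop :=
  ∃ (ℓ ℓ' : ℕ), 1 ≤ ℓ ∧ 1 ≤ ℓ' ∧ ∃ (c : ZMod ℓ → Q.A) (c' : ZMod ℓ' → Q.A),
    IsOCFCycle Q c ∧ IsOCFCycle Q c' ∧ Function.Injective c ∧ Function.Injective c' ∧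
    (∃ i, Q.tgt (c i) = v) ∧ (∃ j, Q.tgt (c' j) = v) ∧ Set.range c ≠ Set.range c'

/-- The set of vertices lying on an oriented cycle with full relations. -/
def ocfVertexSet (Q : GentleData) : Set Q.V :=
  {v | ∃ a : Q.A, OnOCFCycle Q a ∧ Q.tgt a = v}

/-- Oriented cycles with full relations, identified up to cyclic rotation. -/
def ocfCycleSetoid (Q : GentleData) (ℓ : ℕ) :
    Setoid {c : ZMod ℓ → Q.A // IsOCFCycle Q c ∧ Function.Injective c} where
  r c c' := ∃ t : ZMod ℓ, ∀ i, c'.1 i = c.1 (i + t)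
  iseqv := by
    refine ⟨fun c => ⟨0, fun i => by rw [add_zero]⟩, ?_, ?_⟩
    · rintro c c' ⟨t, ht⟩
      exact ⟨-t, fun i => by rw [ht (i + -t), neg_add_cancel_right]⟩
    · rintro a b c ⟨t, ht⟩ ⟨s, hs⟩
      exact ⟨s + t, fun i => by rw [hs i, ht (i + s), add_assoc]⟩

/-- `AGzero Q ℓ` is the value `φ_A(0, ℓ)` of the AG-invariant: the number of
oriented cycles of length `ℓ` with full relations, counted up to rotation. -/
noncomputable def AGzero (Q : GentleData) (ℓ : ℕ) : ℕ :=
  Nat.card (Quotient (ocfCycleSetoid Q ℓ))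

/-- A (nontrivial) forbidden path with arrows `p 0, …, p (m-1)`:
all consecutive length-two subpaths lie in `I`. -/
def IsForbiddenPath (Q : GentleData) (m : ℕ) (p : ℕ → Q.A) : Prop :=
  ∀ i : ℕ, i + 1 < m → Q.tgt (p i) = Q.src (p (i + 1)) ∧ Q.rel (p i) (p (i + 1))

/-- A (nontrivial) forbidden thread: a maximal forbidden path (of `m ≥ 1`
arrows), i.e. one which cannot be extended on either side. -/
def IsForbiddenThread (Q : GentleData) (m : ℕ) (p : ℕ → Q.A) : Prop :=
  1 ≤ m ∧ IsForbiddenPath Q m p ∧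
  (∀ b : Q.A, Q.tgt b = Q.src (p 0) → ¬ Q.rel b (p 0)) ∧
  (∀ b : Q.A, Q.src b = Q.tgt (p (m - 1)) → ¬ Q.rel (p (m - 1)) b)

/-- A trivial forbidden thread at a vertex `v` (of length `0`). -/
def IsTrivialForbiddenThread (Q : GentleData) (v : Q.V) : Prop :=
  ({a : Q.A | Q.tgt a = v} = ∅) ∨ ({a : Q.A | Q.src a = v} = ∅) ∨
  (∃ b b' : Q.A, {a : Q.A | Q.tgt a = v} = {b} ∧ {a : Q.A | Q.src a = v} = {b'} ∧ ¬ Q.rel b b')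

/-- The set of lengths of the forbidden threads of finite length. -/
def finiteForbiddenThreadLengths (Q : GentleData) : Set ℕ∞ :=
  {n : ℕ∞ | (n = 0 ∧ ∃ v : Q.V, IsTrivialForbiddenThread Q v) ∨
    (∃ m : ℕ, n = (m : ℕ∞) ∧ ∃ p : ℕ → Q.A, IsForbiddenThread Q m p)}

/-- The set of lengths of all forbidden threads; an oriented cycle with full
relations gives rise to a forbidden thread of infinite length. -/
def forbiddenThreadLengths (Q : GentleData) : Set ℕ∞ :=
  finiteForbiddenThreadLengths Q ∪
    {n : ℕ∞ | n = ⊤ ∧ ∃ ℓ : ℕ, 1 ≤ ℓ ∧ ∃ c : ZMod ℓ → Q.A, IsOCFCycle Q c}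

section Dimensions

/-- `projDimLE R n M` : the `R`-module `M` admits a projective resolution of
length at most `n`. -/
def projDimLE (R : Type) [Ring R] (n : ℕ) (M : Type) [AddCommGroup M] [Module R M] : Prop :=
  ∃ (P : ℕ → ModuleCat.{0} R) (d : ∀ i : ℕ, ↥(P (i + 1)) →ₗ[R] ↥(P i)) (ε : ↥(P 0) →ₗ[R] M),
    (∀ i, Module.Projective R ↥(P i)) ∧
    Function.Surjective ε ∧ Function.Exact (d 0) ε ∧
    (∀ i, Function.Exact (d (i + 1)) (d i)) ∧
    (∀ i, n ≤ i → Subsingleton ↥(P (i + 1)))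

/-- `injDimLE R n M` : the `R`-module `M` admits an injective coresolution of
length at most `n`. -/
def injDimLE (R : Type) [Ring R] (n : ℕ) (M : Type) [AddCommGroup M] [Module R M] : Prop :=
  ∃ (E : ℕ → ModuleCat.{0} R) (d : ∀ i : ℕ, ↥(E i) →ₗ[R] ↥(E (i + 1))) (ι : M →ₗ[R] ↥(E 0)),
    (∀ i, Module.Injective R ↥(E i)) ∧
    Function.Injective ι ∧ Function.Exact ι (d 0) ∧
    (∀ i, Function.Exact (d i) (d (i + 1))) ∧
    (∀ i, n ≤ i → Subsingleton ↥(E (i + 1)))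

/-- The projective dimension of a module, in `ℕ∞`. -/
noncomputable def projDim (R : Type) [Ring R] (M : Type) [AddCommGroup M] [Module R M] : ℕ∞ :=
  sInf {n : ℕ∞ | ∃ m : ℕ, n = (m : ℕ∞) ∧ projDimLE R m M}

/-- The injective dimension of a module, in `ℕ∞`. -/
noncomputable def injDim (R : Type) [Ring R] (M : Type) [AddCommGroup M] [Module R M] : ℕ∞ :=
  sInf {n : ℕ∞ | ∃ m : ℕ, n = (m : ℕ∞) ∧ injDimLE R m M}

/-- The global dimension of a ring: the supremum of the projective dimensions
of all finitely generated modules. -/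
noncomputable def globalDim (R : Type) [Ring R] : ℕ∞ :=
  ⨆ (M : ModuleCat.{0} R) (_ : Module.Finite R ↥M), projDim R ↥M

/-- The left self-injective dimension: the injective dimension of `R` as a
left module over itself. -/
noncomputable def leftSelfInjDim (R : Type) [Ring R] : ℕ∞ := injDim R R

/-- The right self-injective dimension: the injective dimension of `R` as a
right module over itself. -/
noncomputable def rightSelfInjDim (R : Type) [Ring R] : ℕ∞ := injDim Rᵐᵒᵖ R

end Dimensions

section Radical

/-- The radical of a module: the intersection of its maximal submodules. -/
def radMod (R : Type) [Ring R] (M : Type) [AddCommGroup M] [Module R M] : Submodule R M :=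
  sInf {N : Submodule R M | IsCoatom N}

/-- The top of a module: the quotient by its radical. -/
abbrev topMod (R : Type) [Ring R] (M : Type) [AddCommGroup M] [Module R M] : Type :=
  M ⧸ radMod R M

/-- The socle of a module: the sum of its simple submodules. -/
def socMod (R : Type) [Ring R] (M : Type) [AddCommGroup M] [Module R M] : Submodule R M :=
  sSup {N : Submodule R M | IsAtom N}

/-- The simple right `A`-module `S(v)` at a vertex `v`, realized as the top of
the indecomposable projective `e_v A`. -/
noncomputable abbrev SimpleAt (k : Type) [Field k] (Q : GentleData) (v : Q.V) : Type :=
  topMod (GentleAlgebra k Q)ᵐᵒᵖ ↥(vertexModule k Q v)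

end Radical

section Gorenstein

/-- An indecomposable module: nontrivial, and admitting no nontrivial direct
sum decomposition. -/
def IndecomposableModule (R : Type) [Ring R] (M : Type) [AddCommGroup M] [Module R M] : Prop :=
  Nontrivial M ∧ ∀ N N' : Submodule R M, IsCompl N N' → N = ⊥ ∨ N' = ⊥

/-- A Gorenstein projective module: a syzygy of an acyclic complex of
projective modules which remains acyclic after applying `Hom(−, R)`. -/
def IsGorensteinProjective (R : Type) [Ring R] (G : Type) [AddCommGroup G] [Module R G] :
    Prop :=
  ∃ (P : ℤ → ModuleCat.{0} R) (d : ∀ n : ℤ, ↥(P n) →ₗ[R] ↥(P (n + 1))),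
    (∀ n, Module.Projective R ↥(P n)) ∧
    (∀ n, Function.Exact (d n) (d (n + 1))) ∧
    (∀ n : ℤ, Function.Exact
      (fun g : ↥(P (n + 1 + 1)) →ₗ[R] R => g ∘ₗ d (n + 1))
      (fun g : ↥(P (n + 1)) →ₗ[R] R => g ∘ₗ d n)) ∧
    Nonempty (G ≃ₗ[R] ↥(LinearMap.range (d (-1))))

/-- An indecomposable non-projective Gorenstein projective module. -/
def IsIndecNonProjGP (R : Type) [Ring R] (M : Type) [AddCommGroup M] [Module R M] : Prop :=
  IndecomposableModule R M ∧ IsGorensteinProjective R M ∧ ¬ Module.Projective R M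

/-- An indecomposable Gorenstein projective module. -/
def IsIndecGP (R : Type) [Ring R] (M : Type) [AddCommGroup M] [Module R M] : Prop :=
  IndecomposableModule R M ∧ IsGorensteinProjective R M

/-- Indecomposable non-projective Gorenstein projective right `A`-modules
(realized as right submodules of `A`), up to isomorphism. -/
noncomputable def npgpSetoid (k : Type) [Field k] (Q : GentleData) :
    Setoid {N : Submodule (GentleAlgebra k Q)ᵐᵒᵖ (GentleAlgebra k Q) //
      IsIndecNonProjGP (GentleAlgebra k Q)ᵐᵒᵖ ↥N} where
  r N N' := Nonempty (↥N.1 ≃ₗ[(GentleAlgebra k Q)ᵐᵒᵖ] ↥N'.1)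
  iseqv := ⟨fun _ => ⟨LinearEquiv.refl _ _⟩, fun ⟨e⟩ => ⟨e.symm⟩, fun ⟨e⟩ ⟨f⟩ => ⟨e.trans f⟩⟩

/-- The number of isomorphism classes of indecomposable non-projective
Gorenstein projective right `A`-modules. -/
noncomputable def numIndecNonProjGP (k : Type) [Field k] (Q : GentleData) : ℕ :=
  Nat.card (Quotient (npgpSetoid k Q))

/-- Indecomposable Gorenstein projective right `A`-modules (realized as right
submodules of `A`), up to isomorphism. -/
noncomputable def gpSetoid (k : Type) [Field k] (Q : GentleData) :
    Setoid {N : Submodule (GentleAlgebra k Q)ᵐᵒᵖ (GentleAlgebra k Q) //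
      IsIndecGP (GentleAlgebra k Q)ᵐᵒᵖ ↥N} where
  r N N' := Nonempty (↥N.1 ≃ₗ[(GentleAlgebra k Q)ᵐᵒᵖ] ↥N'.1)
  iseqv := ⟨fun _ => ⟨LinearEquiv.refl _ _⟩, fun ⟨e⟩ => ⟨e.symm⟩, fun ⟨e⟩ ⟨f⟩ => ⟨e.trans f⟩⟩

end Gorenstein

section Strings

/-- A walk in the quiver: `len` letters, the `i`-th letter (for `1 ≤ i ≤ len`)
joining the vertex `vtx (i-1)` to `vtx i`; a letter `(a, true)` is the arrow
`a` read forwards (direct), and `(a, false)` is its formal inverse. -/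
structure StrWalk (Q : GentleData) : Type where
  len : ℕ
  vtx : ℕ → Q.V
  letter : ℕ → Q.A × Bool

/-- The walk is a string: letters join consecutive vertices, the walk is
reduced (no `a a⁻` nor `a⁻ a`), and it avoids the relations. -/
def IsString (Q : GentleData) (w : StrWalk Q) : Prop :=
  (∀ i : ℕ, 1 ≤ i → i ≤ w.len →
    ((w.letter i).2 = true →
      Q.src (w.letter i).1 = w.vtx (i - 1) ∧ Q.tgt (w.letter i).1 = w.vtx i) ∧
    ((w.letter i).2 = false →
      Q.tgt (w.letter i).1 = w.vtx (i - 1) ∧ Q.src (w.letter i).1 = w.vtx i)) ∧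
  (∀ i : ℕ, 1 ≤ i → i + 1 ≤ w.len →
    (¬ ((w.letter i).1 = (w.letter (i + 1)).1 ∧ (w.letter i).2 ≠ (w.letter (i + 1)).2)) ∧
    ((w.letter i).2 = true → (w.letter (i + 1)).2 = true →
      ¬ Q.rel (w.letter i).1 (w.letter (i + 1)).1) ∧
    ((w.letter i).2 = false → (w.letter (i + 1)).2 = false →
      ¬ Q.rel (w.letter (i + 1)).1 (w.letter i).1))

/-- `M` is the string module `M(w)` of the string `w`: it has a `k`-basis
indexed by the vertices `0, …, len` of the walk, the idempotent of a vertex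
fixes exactly the basis vectors sitting at that vertex, and an arrow moves
basis vectors along the corresponding letters of the walk. -/
def IsStringModule (k : Type) [Field k] (Q : GentleData) (w : StrWalk Q) (M : Type)
    [AddCommGroup M] [Module k M] [Module (GentleAlgebra k Q)ᵐᵒᵖ M] : Prop :=
  (∀ (c : k) (m : M), (algebraMap k (GentleAlgebra k Q)ᵐᵒᵖ c) • m = c • m) ∧
  ∃ b : ℕ → M,
    LinearIndependent k (fun i : Fin (w.len + 1) => b i) ∧
    Submodule.span k (b '' {i : ℕ | i ≤ w.len}) = ⊤ ∧
    (∀ i : ℕ, i ≤ w.len → ∀ v : Q.V,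
      (op (idemOf k Q v)) • b i = if w.vtx i = v then b i else 0) ∧
    (∀ i : ℕ, i ≤ w.len → ∀ a : Q.A,
      (op (arrOf k Q a)) • b i =
        (if i + 1 ≤ w.len ∧ w.letter (i + 1) = (a, true) then b (i + 1) else 0) +
        (if 1 ≤ i ∧ w.letter i = (a, false) then b (i - 1) else 0))

/-- The vertex at position `i` is a source of the walk: the adjacent letters
point away from it. -/
def sourceAt (Q : GentleData) (w : StrWalk Q) (i : ℕ) : Prop :=
  i ≤ w.len ∧ (i = 0 ∨ (w.letter i).2 = false) ∧ (i = w.len ∨ (w.letter (i + 1)).2 = true)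

/-- The vertex at position `i` is a sink of the walk: the adjacent letters
point towards it. -/
def sinkAt (Q : GentleData) (w : StrWalk Q) (i : ℕ) : Prop :=
  i ≤ w.len ∧ (i = 0 ∨ (w.letter i).2 = true) ∧ (i = w.len ∨ (w.letter (i + 1)).2 = false)

/-- Left maximality of the inverse prefix (letters `1, …, i`) of a walk of the
shape "inverse prefix followed by direct suffix": the underlying direct path
out of the vertex at position `i` cannot be prolonged (and, when the prefix is
trivial, no second arrow leaves the starting vertex). -/
def LeftMaxAt (Q : GentleData) (w : StrWalk Q) (i : ℕ) : Prop :=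
  if 1 ≤ i then ∀ α : Q.A, Q.src α = w.vtx 0 → Q.rel (w.letter 1).1 α
  else ∀ α : Q.A, Q.src α = w.vtx 0 → (1 ≤ w.len ∧ α = (w.letter 1).1)

/-- Right maximality of the direct suffix (letters `i+1, …, len`) of a walk of
the shape "inverse prefix followed by direct suffix". -/
def RightMaxAt (Q : GentleData) (w : StrWalk Q) (i : ℕ) : Prop :=
  if i < w.len then ∀ β : Q.A, Q.src β = w.vtx w.len → Q.rel (w.letter w.len).1 β
  else ∀ β : Q.A, Q.src β = w.vtx w.len → (1 ≤ w.len ∧ β = (w.letter w.len).1)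

end Strings

/-!
Write `A = kQ/I`. Paths without subpaths in `I` form a `k`-basis of `A`: they span, and they are
independent because `A` acts on formal combinations of paths by concatenation. Since the lengths
of these paths are bounded, paths of positive length span a nilpotent ideal, so `e_v A` has a
greatest proper submodule. This passes to the nonzero quotient `αA` of `e_{t(α)} A`, which is
therefore indecomposable with the same top `S(t(α))`.

If `α` and `β` are consecutive arrows of a cycle with full relations, then `β` is the only arrow `γ`
with `αγ ∈ I`, and `α` is the only arrow `γ` with `γβ ∈ I`. In terms of the basis this says that,
with `v = t(α)`, the elements of `e_v A` killed by `α` on the left form `βA`, and the elements of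
`A e_v` killed by `β` on the right form `Aα`. Hence left multiplication by the arrows of the cycle
splices the modules `e_v A` into an acyclic complex of projectives that stays acyclic under
`Hom(-, A)` and has `αA` as a syzygy.
-/

/-! ### Modules with a greatest proper submodule -/

theorem isCoatom_of_isGreatest_Iio_top {α : Type*} [PartialOrder α] [OrderTop α] {a : α}
    (ha : IsGreatest (Set.Iio ⊤) a) : IsCoatom a :=
  ⟨ha.1.ne, fun _ hb => by_contra fun h => hb.not_ge (ha.2 (Ne.lt_top h))⟩

section GreatestProperSubmodule

variable {R M P : Type*} [Ring R] [AddCommGroup M] [Module R M] [AddCommGroup P] [Module R P]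
  {L : Submodule R P} {f : P →ₗ[R] M}

theorem ker_le_of_isGreatest_Iio_top [Nontrivial M] (hL : IsGreatest (Set.Iio ⊤) L)
    (f : P →ₗ[R] M) (hf : Function.Surjective f) : LinearMap.ker f ≤ L :=
  hL.2 <| lt_top_iff_ne_top.mpr fun h => by
    obtain ⟨m, hm⟩ := exists_ne (0 : M)
    obtain ⟨p, rfl⟩ := hf m
    exact hm (LinearMap.congr_fun (LinearMap.ker_eq_top.mp h) p)

theorem comap_map_eq_of_isGreatest_Iio_top [Nontrivial M] (hL : IsGreatest (Set.Iio ⊤) L)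
    (hf : Function.Surjective f) : (L.map f).comap f = L := by
  rw [Submodule.comap_map_eq, sup_eq_left]
  exact ker_le_of_isGreatest_Iio_top hL f hf

theorem isGreatest_Iio_top_map [Nontrivial M] (hL : IsGreatest (Set.Iio ⊤) L)
    (hf : Function.Surjective f) : IsGreatest (Set.Iio ⊤) (L.map f) := by
  constructor
  · have hmap : L.map f ≠ ⊤ := fun h => (Set.mem_Iio.mp hL.1).ne <| by
      rw [← comap_map_eq_of_isGreatest_Iio_top hL hf, h, Submodule.comap_top]
    exact hmap.lt_top
  · intro N hN
    have hcomap : N.comap f ≠ ⊤ := fun h => (Set.mem_Iio.mp hN).ne <| by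
      rw [← Submodule.map_comap_eq_of_surjective hf N, h, Submodule.map_top,
        LinearMap.range_eq_top.mpr hf]
    rw [← Submodule.map_comap_eq_of_surjective hf N]
    exact Submodule.map_mono (hL.2 hcomap.lt_top)

end GreatestProperSubmodule

section IndecomposableAndTop

variable {R M P : Type} [Ring R] [AddCommGroup M] [Module R M] [AddCommGroup P] [Module R P]

theorem IndecomposableModule.of_isGreatest_Iio_top {K : Submodule R M}
    (hK : IsGreatest (Set.Iio ⊤) K) : IndecomposableModule R M := by
  refine ⟨Submodule.nontrivial_iff R |>.mp ⟨K, ⊤, hK.1.ne⟩, fun N N' h => ?_⟩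
  by_cases hN : N = ⊤
  · exact Or.inr (eq_bot_of_top_isCompl (hN ▸ h))
  by_cases hN' : N' = ⊤
  · exact Or.inl (eq_bot_of_isCompl_top (hN' ▸ h))
  have hsup : N ⊔ N' ≤ K :=
    sup_le (hK.2 (Ne.lt_top hN)) (hK.2 (Ne.lt_top hN'))
  exact absurd (top_le_iff.mp (h.sup_eq_top ▸ hsup)) hK.1.ne

theorem radMod_eq_of_isGreatest_Iio_top {K : Submodule R M} (hK : IsGreatest (Set.Iio ⊤) K) :
    radMod R M = K :=
  le_antisymm (sInf_le (isCoatom_of_isGreatest_Iio_top hK)) <| le_sInf fun _ hN =>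
    ((hN.le_iff_eq hK.1.ne).mp (hK.2 hN.lt_top)).le

theorem IndecomposableModule.of_surjective [Nontrivial M] {L : Submodule R P}
    (hL : IsGreatest (Set.Iio ⊤) L) {f : P →ₗ[R] M} (hf : Function.Surjective f) :
    IndecomposableModule R M :=
  .of_isGreatest_Iio_top (isGreatest_Iio_top_map hL hf)

theorem nonempty_topMod_equiv_of_surjective [Nontrivial M] {L : Submodule R P}
    (hL : IsGreatest (Set.Iio ⊤) L) {f : P →ₗ[R] M} (hf : Function.Surjective f) :
    Nonempty (topMod R M ≃ₗ[R] topMod R P) := by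
  have hker : LinearMap.ker ((radMod R M).mkQ ∘ₗ f) = radMod R P := by
    rw [LinearMap.ker_comp, Submodule.ker_mkQ,
      radMod_eq_of_isGreatest_Iio_top (isGreatest_Iio_top_map hL hf),
      comap_map_eq_of_isGreatest_Iio_top hL hf, radMod_eq_of_isGreatest_Iio_top hL]
  exact ⟨((Submodule.quotEquivOfEq _ _ hker.symm).trans
    (LinearMap.quotKerEquivOfSurjective _ ((Submodule.mkQ_surjective _).comp hf))).symm⟩

end IndecomposableAndTop

/-! ### Principal right ideals and perfect pairs -/

section PrincipalRightIdeal

variable {A : Type*} [Semiring A]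

/-- The right ideal `aA` generated by `a`, as a submodule over `Aᵐᵒᵖ`. It unfolds to
`vertexModule` and `arrowModule` when `a` is a trivial path or an arrow. -/
abbrev principalRightIdeal (a : A) : Submodule Aᵐᵒᵖ A :=
  Submodule.span Aᵐᵒᵖ {a}

theorem mem_principalRightIdeal {a x : A} : x ∈ principalRightIdeal a ↔ ∃ y, a * y = x :=
  Submodule.mem_span_singleton.trans ⟨fun ⟨y, hy⟩ => ⟨y.unop, hy⟩, fun ⟨y, hy⟩ => ⟨op y, hy⟩⟩

theorem self_mem_principalRightIdeal (a : A) : a ∈ principalRightIdeal a :=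
  Submodule.mem_span_singleton_self a

theorem mem_principalRightIdeal_of_isIdempotentElem {e x : A} (he : IsIdempotentElem e) :
    x ∈ principalRightIdeal e ↔ e * x = x :=
  mem_principalRightIdeal.trans
    ⟨fun ⟨y, hy⟩ => by rw [← hy, ← mul_assoc, he.eq], fun h => ⟨x, h⟩⟩

theorem projective_principalRightIdeal {e : A} (he : IsIdempotentElem e) :
    Module.Projective Aᵐᵒᵖ (principalRightIdeal e) := by
  refine Module.Projective.of_split
    ((opLinearEquiv Aᵐᵒᵖ : A ≃ₗ[Aᵐᵒᵖ] Aᵐᵒᵖ).toLinearMap ∘ₗ Submodule.subtype _)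
    (LinearMap.toSpanSingleton Aᵐᵒᵖ _ ⟨e, self_mem_principalRightIdeal e⟩) ?_
  ext x
  exact (mem_principalRightIdeal_of_isIdempotentElem he).mp x.2

end PrincipalRightIdeal

section LocalIdempotent

/-- The kernel of a ring homomorphism as a submodule of `A` over `Aᵐᵒᵖ`. -/
def rightKer {A B : Type*} [Semiring A] [Semiring B] (ε : A →+* B) : Submodule Aᵐᵒᵖ A where
  carrier := {x | ε x = 0}
  add_mem' hx hy := (map_add ε _ _).trans (by rw [hx.out, hy.out, add_zero])
  zero_mem' := map_zero ε
  smul_mem' r x hx := (map_mul ε x r.unop).trans (by rw [hx.out, zero_mul])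

variable {A D : Type*} [Ring A] [DivisionRing D] {ε : A →+* D} {e : A}

theorem exists_mul_eq_of_apply_ne_zero (hε : Function.Surjective ε) (he : IsIdempotentElem e)
    (hεe : ε e = 1) (hnil : ∀ x, e * x = x → ε x = 0 → IsNilpotent x) {x : A}
    (hx : e * x = x) (hεx : ε x ≠ 0) : ∃ y, x * y = e := by
  obtain ⟨y, hy⟩ := hε (ε x)⁻¹
  have hexy : e * (x * y) = x * y := by rw [← mul_assoc, hx]
  have hz : IsNilpotent (e - x * y) := by
    refine hnil _ (by rw [mul_sub, he.eq, hexy]) ?_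
    rw [map_sub, map_mul, hy, hεe, mul_inv_cancel₀ hεx, sub_self]
  obtain ⟨u, hu⟩ := hz.isUnit_one_sub
  have hxy : x * y = e * u := by
    rw [hu, mul_sub, mul_one, mul_sub, he.eq, hexy, sub_sub_cancel]
  exact ⟨y * ↑u⁻¹, by rw [← mul_assoc, hxy, Units.mul_inv_cancel_right]⟩

theorem isGreatest_Iio_top_rightKer_submoduleOf (hε : Function.Surjective ε)
    (he : IsIdempotentElem e) (hεe : ε e = 1)
    (hnil : ∀ x, e * x = x → ε x = 0 → IsNilpotent x) :
    IsGreatest (Set.Iio ⊤) ((rightKer ε).submoduleOf (principalRightIdeal e)) := by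
  let e' : principalRightIdeal e := ⟨e, self_mem_principalRightIdeal e⟩
  constructor
  · have hne : (rightKer ε).submoduleOf (principalRightIdeal e) ≠ ⊤ := fun h =>
      one_ne_zero (hεe.symm.trans (h ▸ Submodule.mem_top : e' ∈ (rightKer ε).submoduleOf _))
    exact hne.lt_top
  · intro N hN x hxN
    by_contra hεx
    obtain ⟨y, hy⟩ := exists_mul_eq_of_apply_ne_zero hε he hεe hnil
      ((mem_principalRightIdeal_of_isIdempotentElem he).mp x.2) hεx
    have he'N : e' ∈ N := by
      rw [show e' = op y • x from Subtype.ext hy.symm]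
      exact N.smul_mem _ hxN
    refine (Set.mem_Iio.mp hN).ne ((Submodule.eq_top_iff').mpr fun z => ?_)
    rw [show z = op z.1 • e' from
      Subtype.ext ((mem_principalRightIdeal_of_isIdempotentElem he).mp z.2).symm]
    exact N.smul_mem _ he'N

end LocalIdempotent

section PerfectPair

variable {A : Type*} [Semiring A]

/-- A perfect pair `(a, b)` at `e`, after the perfect pairs of paths of Chen, Shen and Zhou: the
right annihilator of `a` inside `eA` is contained in `bA`, the left annihilator of `b` inside `Ae`
is contained in `Aa`, and `ab = 0`. -/
structure IsPerfectPair (e a b : A) : Prop where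
  mul_eq_zero : a * b = 0
  exists_right : ∀ x, e * x = x → a * x = 0 → ∃ y, b * y = x
  exists_left : ∀ x, x * e = x → x * b = 0 → ∃ y, y * a = x

/-- Left multiplication by `a` as a homomorphism of right modules `eA → fA`, where `fa = a`. -/
def principalRightIdeal.mulLeft (e : A) {f a : A} (ha : f * a = a) :
    principalRightIdeal e →ₗ[Aᵐᵒᵖ] principalRightIdeal f :=
  (LinearMap.mulLeft Aᵐᵒᵖ a).restrict fun x _ =>
    mem_principalRightIdeal.mpr ⟨a * x, by rw [← mul_assoc, ha, LinearMap.mulLeft_apply]⟩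

namespace principalRightIdeal

@[simp]
theorem coe_mulLeft_apply (e : A) {f a : A} (ha : f * a = a) (x : principalRightIdeal e) :
    (mulLeft e ha x : A) = a * x :=
  rfl

theorem mulLeft_comp_mulLeft (e : A) {f g a b : A} (hb : f * b = b) (ha : g * a = a)
    (hab : a * b = 0) : mulLeft f ha ∘ₗ mulLeft e hb = 0 := by
  ext x
  simp [← mul_assoc, hab]

theorem exact_mulLeft {e f g a b : A} (hf : IsIdempotentElem f) (hb : f * b = b) (hbe : b * e = b)
    (ha : g * a = a) (h : IsPerfectPair f a b) :
    Function.Exact (mulLeft e hb) (mulLeft f ha) := by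
  intro x
  refine ⟨fun hx => ?_, ?_⟩
  · obtain ⟨y, hy⟩ := h.exists_right x ((mem_principalRightIdeal_of_isIdempotentElem hf).mp x.2)
      (congrArg Subtype.val hx)
    refine ⟨⟨e * y, mem_principalRightIdeal.mpr ⟨y, rfl⟩⟩, Subtype.ext ?_⟩
    rw [coe_mulLeft_apply, ← mul_assoc, hbe, hy]
  · rintro ⟨y, rfl⟩
    exact LinearMap.congr_fun (mulLeft_comp_mulLeft e hb ha h.mul_eq_zero) y

theorem map_eq_op_mul {e : A} (he : IsIdempotentElem e)
    (φ : principalRightIdeal e →ₗ[Aᵐᵒᵖ] Aᵐᵒᵖ) (x : principalRightIdeal e) :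
    φ x = op ((φ ⟨e, self_mem_principalRightIdeal e⟩).unop * x) := by
  have hx : x = op (x : A) • ⟨e, self_mem_principalRightIdeal e⟩ :=
    Subtype.ext ((mem_principalRightIdeal_of_isIdempotentElem he).mp x.2).symm
  conv_lhs => rw [hx, map_smul]
  rfl

theorem exact_comp_mulLeft {e f g a b : A} (hf : IsIdempotentElem f) (hb : f * b = b)
    (hbe : b * e = b) (ha : g * a = a) (h : IsPerfectPair f a b) :
    Function.Exact (fun φ : principalRightIdeal g →ₗ[Aᵐᵒᵖ] Aᵐᵒᵖ => φ ∘ₗ mulLeft f ha)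
      (fun φ : principalRightIdeal f →ₗ[Aᵐᵒᵖ] Aᵐᵒᵖ => φ ∘ₗ mulLeft e hb) := by
  intro φ
  refine ⟨fun hφ => ?_, ?_⟩
  · set c : A := (φ ⟨f, self_mem_principalRightIdeal f⟩).unop
    have hcf : c * f = c :=
      (congrArg unop (map_eq_op_mul hf φ ⟨f, self_mem_principalRightIdeal f⟩)).symm
    have hcb : c * b = 0 := by
      have hφe : φ (mulLeft e hb ⟨e, self_mem_principalRightIdeal e⟩) = 0 :=
        LinearMap.congr_fun hφ _
      rwa [map_eq_op_mul hf, coe_mulLeft_apply, hbe, op_eq_zero_iff] at hφe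
    obtain ⟨y, hy⟩ := h.exists_left c hcf hcb
    refine ⟨(opLinearEquiv Aᵐᵒᵖ : A ≃ₗ[Aᵐᵒᵖ] Aᵐᵒᵖ).toLinearMap ∘ₗ
      LinearMap.mulLeft Aᵐᵒᵖ y ∘ₗ Submodule.subtype _, LinearMap.ext fun x => ?_⟩
    rw [map_eq_op_mul hf φ x]
    change op (y * (a * x)) = op (c * x)
    rw [← mul_assoc, hy]
  · rintro ⟨ψ, rfl⟩
    change (ψ ∘ₗ mulLeft f ha) ∘ₗ mulLeft e hb = 0
    rw [LinearMap.comp_assoc, mulLeft_comp_mulLeft e hb ha h.mul_eq_zero, LinearMap.comp_zero]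

theorem map_subtype_range_mulLeft {e f a : A} (ha : f * a = a) (hae : a * e = a) :
    (LinearMap.range (mulLeft e ha)).map (Submodule.subtype _) = principalRightIdeal a := by
  ext x
  simp only [Submodule.mem_map, LinearMap.mem_range, mem_principalRightIdeal]
  constructor
  · rintro ⟨_, ⟨y, rfl⟩, rfl⟩
    exact ⟨y, rfl⟩
  · rintro ⟨y, rfl⟩
    refine ⟨_, ⟨⟨e * y, mem_principalRightIdeal.mpr ⟨y, rfl⟩⟩, rfl⟩, ?_⟩
    rw [Submodule.subtype_apply, coe_mulLeft_apply, ← mul_assoc, hae]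

end principalRightIdeal

theorem isGorensteinProjective_principalRightIdeal {A : Type} [Ring A] {e a : ℤ → A}
    (he : ∀ n, IsIdempotentElem (e n)) (hae : ∀ n, a n * e n = a n)
    (hea : ∀ n, e (n + 1) * a n = a n) (h : ∀ n, IsPerfectPair (e (n + 1)) (a (n + 1)) (a n)) :
    IsGorensteinProjective Aᵐᵒᵖ (principalRightIdeal (a (-1))) :=
  ⟨fun n => ModuleCat.of _ (principalRightIdeal (e n)),
    fun n => principalRightIdeal.mulLeft (e n) (hea n),
    fun n => projective_principalRightIdeal (he n),
    fun n => principalRightIdeal.exact_mulLeft (he _) (hea n) (hae n) (hea _) (h n),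
    fun n => principalRightIdeal.exact_comp_mulLeft (he _) (hea n) (hae n) (hea _) (h n),
    ⟨.trans (.ofEq _ _ (principalRightIdeal.map_subtype_range_mulLeft (hea _) (hae _)).symm)
      (Submodule.equivSubtypeMap _ _).symm⟩⟩

end PerfectPair

theorem ker_le_span_image_compl {ι k M N : Type*} [Ring k] [AddCommGroup M] [Module k M]
    [AddCommGroup N] [Module k N] {v : ι → M} (hv : Submodule.span k (Set.range v) = ⊤)
    (T : M →ₗ[k] N) {s : Set ι} (hs : LinearIndepOn k (T ∘ v) s) (hsc : ∀ i ∉ s, T (v i) = 0) :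
    LinearMap.ker T ≤ Submodule.span k (v '' sᶜ) := by
  intro x hx
  have hsc' : Submodule.span k (v '' sᶜ) ≤ LinearMap.ker T :=
    Submodule.span_le.mpr (Set.image_subset_iff.mpr hsc)
  obtain ⟨y, hy, z, hz, rfl⟩ : ∃ y ∈ Submodule.span k (v '' s),
      ∃ z ∈ Submodule.span k (v '' sᶜ), y + z = x := by
    rw [← Submodule.mem_sup, ← Submodule.span_union, ← Set.image_union, Set.union_compl_self,
      Set.image_univ, hv]
    exact Submodule.mem_top
  obtain ⟨l, hl, rfl⟩ := (Finsupp.mem_span_image_iff_linearCombination k).mp hy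
  have hTl : Finsupp.linearCombination k (T ∘ v) l = 0 := by
    rw [← LinearMap.map_finsupp_linearCombination]
    simpa only [map_add, LinearMap.mem_ker.mp (hsc' hz), add_zero] using LinearMap.mem_ker.mp hx
  rwa [linearIndepOn_iff.mp hs l hl hTl, map_zero, zero_add]

/-! ### Permitted paths as a basis of `kQ/I` -/

namespace GentleAlgebra

variable {k : Type} [Field k] {Q : GentleData}

theorem idemOf_mul_idemOf (v w : Q.V) :
    idemOf k Q v * idemOf k Q w = if v = w then idemOf k Q v else 0 := by
  split_ifs with h
  · subst h
    simpa only [idemOf, ofGen, map_mul] using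
      RingQuot.mkAlgHom_rel k (GentleRel.idem (k := k) v)
  · simpa only [idemOf, ofGen, map_mul, map_zero] using
      RingQuot.mkAlgHom_rel k (GentleRel.orth (k := k) v w h)

theorem isIdempotentElem_idemOf (v : Q.V) : IsIdempotentElem (idemOf k Q v) := by
  rw [IsIdempotentElem, idemOf_mul_idemOf, if_pos rfl]

theorem sum_idemOf : ∑ v, idemOf k Q v = 1 := by
  simpa only [idemOf, ofGen, map_sum, map_one] using
    RingQuot.mkAlgHom_rel k (GentleRel.sum_idem (k := k) (Q := Q))

theorem idemOf_src_mul_arrOf (a : Q.A) : idemOf k Q (Q.src a) * arrOf k Q a = arrOf k Q a := by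
  simpa only [idemOf, arrOf, ofGen, map_mul] using
    RingQuot.mkAlgHom_rel k (GentleRel.src_mul (k := k) a)

theorem idemOf_mul_arrOf (v : Q.V) (a : Q.A) :
    idemOf k Q v * arrOf k Q a = if v = Q.src a then arrOf k Q a else 0 := by
  rw [← idemOf_src_mul_arrOf, ← mul_assoc, idemOf_mul_idemOf, ite_mul, zero_mul]
  exact ite_congr rfl (fun h => by rw [h]) fun _ => rfl

theorem arrOf_mul_idemOf_tgt (a : Q.A) : arrOf k Q a * idemOf k Q (Q.tgt a) = arrOf k Q a := by
  simpa only [idemOf, arrOf, ofGen, map_mul] using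
    RingQuot.mkAlgHom_rel k (GentleRel.mul_tgt (k := k) a)

theorem arrOf_mul_arrOf_of_rel {a b : Q.A} (h : Q.rel a b) : arrOf k Q a * arrOf k Q b = 0 := by
  simpa only [arrOf, ofGen, map_mul, map_zero] using
    RingQuot.mkAlgHom_rel k (GentleRel.relation (k := k) a b h)

theorem adjoin_range_ofGen : Algebra.adjoin k (Set.range (ofGen k Q)) = ⊤ := by
  have hrange : Set.range (ofGen k Q) =
      RingQuot.mkAlgHom k (GentleRel k Q) '' Set.range (FreeAlgebra.ι k) := by
    rw [← Set.range_comp]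
    rfl
  rw [hrange, ← AlgHom.map_adjoin, FreeAlgebra.adjoin_range_ι, Algebra.map_top,
    AlgHom.range_eq_top]
  exact RingQuot.mkAlgHom_surjective k _

/-- The relations of `kQ/I` for a family `e` indexed by vertices and a family `x` indexed by
arrows of a `k`-algebra; such data are the same as algebra homomorphisms out of `kQ/I`. -/
structure IsRepresentation {B : Type*} [Semiring B] (e : Q.V → B) (x : Q.A → B) : Prop where
  idem_mul_idem : ∀ v w, e v * e w = if v = w then e v else 0
  sum_idem : ∑ v, e v = 1
  src_mul : ∀ a, e (Q.src a) * x a = x a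
  mul_tgt : ∀ a, x a * e (Q.tgt a) = x a
  relation : ∀ a b, Q.rel a b → x a * x b = 0

section Lift

variable {B : Type*} [Semiring B] [Algebra k B] {e : Q.V → B} {x : Q.A → B}

/-- The algebra homomorphism out of `kQ/I` determined by the images of the vertices and arrows. -/
noncomputable def lift (h : IsRepresentation e x) : GentleAlgebra k Q →ₐ[k] B :=
  RingQuot.liftAlgHom k ⟨FreeAlgebra.lift k (GenSym.rec e x), fun _ _ hr => by
    induction hr with
    | idem v => simp [h.idem_mul_idem]
    | orth v w hvw => simp [h.idem_mul_idem, hvw]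
    | sum_idem => simp [h.sum_idem]
    | src_mul a => simp [h.src_mul]
    | mul_tgt a => simp [h.mul_tgt]
    | relation a b hab => simp [h.relation a b hab]⟩

@[simp]
theorem lift_idemOf (h : IsRepresentation e x) (v : Q.V) : lift h (idemOf k Q v) = e v := by
  simp [lift, idemOf, ofGen]

@[simp]
theorem lift_arrOf (h : IsRepresentation e x) (a : Q.A) : lift h (arrOf k Q a) = x a := by
  simp [lift, arrOf, ofGen]

end Lift

/-- The augmentation of `kQ/I` at a vertex `v`, giving the simple module `S(v)`. -/
noncomputable def augmentation (k : Type) [Field k] {Q : GentleData} (v : Q.V) :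
    GentleAlgebra k Q →ₐ[k] k :=
  lift (e := fun w => if w = v then (1 : k) else 0) (x := fun _ => 0)
    { idem_mul_idem := fun u w => by aesop
      sum_idem := by simp
      src_mul := fun _ => mul_zero _
      mul_tgt := fun _ => zero_mul _
      relation := fun _ _ _ => mul_zero _ }

@[simp]
theorem augmentation_idemOf (v w : Q.V) :
    augmentation k v (idemOf k Q w) = if w = v then 1 else 0 :=
  lift_idemOf _ w

@[simp]
theorem augmentation_arrOf (v : Q.V) (a : Q.A) : augmentation k v (arrOf k Q a) = 0 :=
  lift_arrOf _ a

end GentleAlgebra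

namespace GentleData

variable (Q : GentleData)

/-- Two arrows whose product is a path of length two outside the ideal `I`. -/
def PermittedPair (a b : Q.A) : Prop :=
  Q.tgt a = Q.src b ∧ ¬ Q.rel a b

/-- The lengths of the paths without subpaths in `I` are bounded. -/
def HasBoundedPaths : Prop :=
  ∃ N, ∀ l : List Q.A, l.IsChain Q.PermittedPair → l.length ≤ N

/-- A list of arrows together with the vertex where it is supposed to end; the vertex is only
needed for the empty list. No compatibility of sources and targets is imposed, see
`Word.IsPermitted`. -/
@[ext]
structure Word where
  arrows : List Q.A
  last : Q.V

end GentleData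

theorem IsGentle.hasBoundedPaths {Q : GentleData} (hQ : IsGentle Q) : Q.HasBoundedPaths := by
  obtain ⟨-, -, -, -, -, -, -, N, hN⟩ := hQ
  refine ⟨N, fun l hl => not_lt.mp fun hlt => ?_⟩
  refine hN (fun i => l.getD i (l[0]'(Nat.zero_lt_of_lt hlt))) fun i hi => ?_
  rw [List.getD_eq_getElem _ _ (by omega), List.getD_eq_getElem _ _ (by omega)]
  exact List.isChain_iff_getElem.mp hl i (by omega)

namespace GentleData.Word

variable {Q : GentleData}

/-- The vertex where a word starts. -/
def first (p : Q.Word) : Q.V :=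
  (p.arrows.head?.map Q.src).getD p.last

/-- The path of length zero at a vertex. -/
abbrev nil (v : Q.V) : Q.Word :=
  ⟨[], v⟩

/-- The path of length one given by an arrow. -/
abbrev ofArrow (a : Q.A) : Q.Word :=
  ⟨[a], Q.tgt a⟩

/-- Concatenation of words. -/
abbrev append (p q : Q.Word) : Q.Word :=
  ⟨p.arrows ++ q.arrows, q.last⟩

@[elab_as_elim]
theorem induction {motive : Q.Word → Prop} (nil : ∀ v, motive (nil v))
    (append : ∀ a p, motive p → motive ((ofArrow a).append p)) (p : Q.Word) : motive p := by
  obtain ⟨l, v⟩ := p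
  induction l with
  | nil => exact nil v
  | cons a l ih => exact append a ⟨l, v⟩ ih

/-- The word is a path of the quiver without subpaths in `I`. -/
def IsPermitted (p : Q.Word) : Prop :=
  p.arrows.IsChain Q.PermittedPair ∧ ∀ a ∈ p.arrows.getLast?, Q.tgt a = p.last

theorem isPermitted_nil (v : Q.V) : (nil v).IsPermitted :=
  ⟨List.isChain_nil, fun _ h => by simp at h⟩

theorem isPermitted_ofArrow (a : Q.A) : (ofArrow a).IsPermitted :=
  ⟨List.isChain_singleton a, fun b h => by simp_all⟩

theorem IsPermitted.tgt_eq_first {a : Q.A} {p : Q.Word} (h : ((ofArrow a).append p).IsPermitted) :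
    Q.tgt a = p.first := by
  obtain ⟨_ | ⟨b, l⟩, v⟩ := p
  · exact h.2 a rfl
  · exact (List.isChain_cons_cons.mp h.1).1.1

theorem isPermitted_append_iff {p q : Q.Word} (h : p.last = q.first) :
    (p.append q).IsPermitted ↔ p.IsPermitted ∧ q.IsPermitted ∧
      ∀ a ∈ p.arrows.getLast?, ∀ b ∈ q.arrows.head?, ¬ Q.rel a b := by
  obtain ⟨l, u⟩ := p
  obtain ⟨_ | ⟨b, m⟩, v⟩ := q
  · simp_all [IsPermitted, first]
  · obtain rfl : u = Q.src b := h
    simp only [IsPermitted, PermittedPair, List.isChain_append, List.getLast?_append,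
      List.head?_cons, List.getLast?_eq_none_iff, Option.mem_def, Option.some.injEq,
      Option.or_eq_some_iff, forall_eq', imp_and, forall_and, reduceCtorEq, false_and, or_false]
    tauto

theorem exists_rel_of_not_isPermitted_append {p q : Q.Word} (hp : p.IsPermitted)
    (hq : q.IsPermitted) (h : p.last = q.first) (hpq : ¬ (p.append q).IsPermitted) :
    ∃ a ∈ p.arrows.getLast?, ∃ b ∈ q.arrows.head?, Q.rel a b := by
  by_contra! hrel
  exact hpq ((isPermitted_append_iff h).mpr ⟨hp, hq, hrel⟩)

theorem first_eq_src {p : Q.Word} {b : Q.A} (hb : b ∈ p.arrows.head?) : p.first = Q.src b := by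
  rw [first, Option.mem_def.mp hb, Option.map_some, Option.getD_some]

end GentleData.Word

namespace GentleAlgebra

open GentleData

section Paths

variable {k : Type} [Field k] {Q : GentleData}

/-- The element of `kQ/I` given by a word; it is zero unless the word is permitted. -/
noncomputable def pathOf (k : Type) [Field k] {Q : GentleData} (p : Q.Word) : GentleAlgebra k Q :=
  (p.arrows.map (arrOf k Q)).prod * idemOf k Q p.last

theorem pathOf_nil (v : Q.V) : pathOf k (.nil v) = idemOf k Q v :=
  one_mul _

theorem pathOf_ofArrow (a : Q.A) : pathOf k (.ofArrow a) = arrOf k Q a := by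
  simp [pathOf, arrOf_mul_idemOf_tgt]

theorem pathOf_ofArrow_append (a : Q.A) (p : Q.Word) :
    pathOf k ((Word.ofArrow a).append p) = arrOf k Q a * pathOf k p := by
  simp [pathOf, mul_assoc]

theorem idemOf_mul_pathOf (v : Q.V) (p : Q.Word) :
    idemOf k Q v * pathOf k p = if v = p.first then pathOf k p else 0 := by
  cases p using Word.induction with
  | nil w =>
    rw [pathOf_nil, idemOf_mul_idemOf]
    exact ite_congr rfl (fun h => congrArg _ h) fun _ => rfl
  | append a p =>
    rw [pathOf_ofArrow_append, ← mul_assoc, idemOf_mul_arrOf, ite_mul, zero_mul]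
    rfl

theorem pathOf_mul_pathOf (p q : Q.Word) :
    pathOf k p * pathOf k q = if p.last = q.first then pathOf k (p.append q) else 0 := by
  rw [pathOf, mul_assoc, idemOf_mul_pathOf, mul_ite, mul_zero]
  simp [pathOf, mul_assoc]

theorem pathOf_append {p q : Q.Word} (h : p.last = q.first) :
    pathOf k (p.append q) = pathOf k p * pathOf k q := by
  rw [pathOf_mul_pathOf, if_pos h]

theorem arrOf_mul_pathOf_eq_zero {a : Q.A} {p : Q.Word} (h : Q.tgt a ≠ p.first) :
    arrOf k Q a * pathOf k p = 0 := by
  rw [← pathOf_ofArrow, pathOf_mul_pathOf, if_neg h]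

theorem exists_arrOf_mul_eq_pathOf {b : Q.A} {p : Q.Word} (hb : b ∈ p.arrows.head?) :
    ∃ y, arrOf k Q b * y = pathOf k p := by
  obtain ⟨_ | ⟨_, l⟩, v⟩ := p
  · cases hb
  · cases hb
    exact ⟨_, (pathOf_ofArrow_append b ⟨l, v⟩).symm⟩

theorem exists_mul_arrOf_eq_pathOf {a : Q.A} {p : Q.Word} (ha : a ∈ p.arrows.getLast?)
    (hlast : Q.tgt a = p.last) : ∃ y, y * arrOf k Q a = pathOf k p := by
  obtain ⟨l, hl⟩ := List.getLast?_eq_some_iff.mp ha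
  refine ⟨(l.map (arrOf k Q)).prod, ?_⟩
  rw [pathOf, hl, ← hlast, List.map_append, List.prod_append, List.map_singleton,
    List.prod_singleton, mul_assoc, arrOf_mul_idemOf_tgt]

theorem pathOf_eq_zero {p : Q.Word} (hp : ¬ p.IsPermitted) : pathOf k p = 0 := by
  induction p using Word.induction with
  | nil v => exact absurd (Word.isPermitted_nil v) hp
  | append a p ih =>
    rw [pathOf_ofArrow_append]
    by_cases ha : Q.tgt a = p.first
    swap
    · exact arrOf_mul_pathOf_eq_zero ha
    by_cases hp' : p.IsPermitted
    swap
    · rw [ih hp', mul_zero]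
    obtain ⟨_, ⟨⟩, b, hb, hab⟩ :=
      Word.exists_rel_of_not_isPermitted_append (Word.isPermitted_ofArrow a) hp' ha hp
    obtain ⟨y, hy⟩ := exists_arrOf_mul_eq_pathOf (k := k) hb
    exact hy ▸ by rw [← mul_assoc, arrOf_mul_arrOf_of_rel (a := a) hab, zero_mul]

theorem span_range_pathOf : Submodule.span k (Set.range (pathOf k (Q := Q))) = ⊤ := by
  set S := Submodule.span k (Set.range (pathOf k (Q := Q))) with hS
  have hmem (p : Q.Word) : pathOf k p ∈ S := Submodule.subset_span ⟨p, rfl⟩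
  have hgen (x : GenSym Q) : S ≤ S.comap (LinearMap.mulLeft k (ofGen k Q x)) := by
    rw [hS, Submodule.span_le]
    rintro _ ⟨p, rfl⟩
    cases x with
    | vertex v =>
      change idemOf k Q v * pathOf k p ∈ S
      rw [← pathOf_nil, pathOf_mul_pathOf]
      split_ifs
      exacts [hmem _, zero_mem _]
    | arrow a =>
      change arrOf k Q a * pathOf k p ∈ S
      rw [← pathOf_ofArrow_append]
      exact hmem _
  have hmul (x : GentleAlgebra k Q) : ∀ y ∈ S, x * y ∈ S := by
    have hx : x ∈ Algebra.adjoin k (Set.range (ofGen k Q)) := by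
      rw [adjoin_range_ofGen]
      exact Algebra.mem_top
    induction hx using Algebra.adjoin_induction with
    | mem _ hx =>
      obtain ⟨x, rfl⟩ := hx
      exact fun y hy => hgen x hy
    | algebraMap r => exact fun y hy => Algebra.smul_def r y ▸ S.smul_mem r hy
    | add x z _ _ hx hz => exact fun y hy => add_mul x z y ▸ S.add_mem (hx y hy) (hz y hy)
    | mul x z _ _ hx hz => exact fun y hy => mul_assoc x z y ▸ hx _ (hz y hy)
  have hone : (1 : GentleAlgebra k Q) ∈ S := by
    rw [← sum_idemOf]
    exact S.sum_mem fun v _ => by simpa only [pathOf_nil] using hmem (.nil v)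
  exact Submodule.eq_top_iff'.mpr fun x => by simpa only [mul_one] using hmul x 1 hone

end Paths

section WordRepresentation

variable (k : Type) [Field k] {Q : GentleData}

/-- A trivial path acting on formal linear combinations of words from the left. -/
noncomputable def wordIdem (v : Q.V) : Module.End k (Q.Word →₀ k) :=
  Finsupp.linearCombination k fun p => if v = p.first then .single p 1 else 0

open scoped Classical in
/-- An arrow acting on formal linear combinations of words by prepending it to those words for
which the result is permitted. -/
noncomputable def wordArrow (a : Q.A) : Module.End k (Q.Word →₀ k) :=
  Finsupp.linearCombination k fun p =>
    if ((Word.ofArrow a).append p).IsPermitted then .single ((Word.ofArrow a).append p) 1 else 0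

variable {k}

theorem wordIdem_single (v : Q.V) (p : Q.Word) :
    wordIdem k v (.single p 1) = if v = p.first then .single p 1 else 0 := by
  simp [wordIdem]

open scoped Classical in
theorem wordArrow_single (a : Q.A) (p : Q.Word) :
    wordArrow k a (.single p 1) = if ((Word.ofArrow a).append p).IsPermitted then
      .single ((Word.ofArrow a).append p) 1 else 0 := by
  simp [wordArrow]

theorem wordEnd_ext {S T : Module.End k (Q.Word →₀ k)}
    (h : ∀ p, S (.single p 1) = T (.single p 1)) : S = T :=
  Finsupp.lhom_ext' fun p => LinearMap.ext_ring (h p)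

theorem isRepresentation_word : IsRepresentation (Q := Q) (wordIdem k) (wordArrow k) where
  idem_mul_idem v w := by
    refine wordEnd_ext fun p => ?_
    rw [Module.End.mul_apply, wordIdem_single]
    split_ifs <;> simp_all [wordIdem_single]
  sum_idem := by
    refine wordEnd_ext fun p => ?_
    simp [LinearMap.sum_apply, wordIdem_single]
  src_mul a := by
    refine wordEnd_ext fun p => ?_
    rw [Module.End.mul_apply, wordArrow_single]
    split_ifs
    · exact (wordIdem_single _ _).trans (if_pos rfl)
    · exact map_zero _
  mul_tgt a := by
    refine wordEnd_ext fun p => ?_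
    rw [Module.End.mul_apply, wordIdem_single]
    split_ifs with h
    · rfl
    · rw [map_zero, wordArrow_single, if_neg (mt Word.IsPermitted.tgt_eq_first h)]
  relation a b hab := by
    refine wordEnd_ext fun p => ?_
    rw [Module.End.mul_apply, wordArrow_single]
    split_ifs
    · rw [wordArrow_single, if_neg, LinearMap.zero_apply]
      intro hp
      exact (List.isChain_cons_cons.mp hp.1).1.2 hab
    · rw [map_zero, LinearMap.zero_apply]

variable (k Q) in
/-- The action of `kQ/I` on formal linear combinations of words by concatenation. On permitted
words it is the left regular representation in coordinates; the other words are kept so that no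
subtype is needed. -/
noncomputable def wordRepresentation : GentleAlgebra k Q →ₐ[k] Module.End k (Q.Word →₀ k) :=
  lift isRepresentation_word

theorem wordRepresentation_pathOf {p : Q.Word} (hp : p.IsPermitted) :
    wordRepresentation k Q (pathOf k p) (∑ v, .single (.nil v) 1) = .single p 1 := by
  induction p using Word.induction with
  | nil v =>
    rw [pathOf_nil, wordRepresentation, lift_idemOf, map_sum]
    exact (Finset.sum_congr rfl fun w _ => wordIdem_single v (.nil w)).trans
      (Fintype.sum_ite_eq v _)
  | append a p ih =>
    have hp' : p.IsPermitted := ((Word.isPermitted_append_iff hp.tgt_eq_first).mp hp).2.1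
    rw [pathOf_ofArrow_append, map_mul, Module.End.mul_apply, ih hp', wordRepresentation,
      lift_arrOf, wordArrow_single, if_pos hp]

theorem linearIndepOn_pathOf : LinearIndepOn k (pathOf k) {p : Q.Word | p.IsPermitted} := by
  refine LinearIndepOn.of_comp (LinearMap.applyₗ (∑ v, Finsupp.single (Word.nil v) 1) ∘ₗ
    (wordRepresentation k Q).toLinearMap) ?_
  have hsingle := (Finsupp.linearIndependent_single_one k Q.Word).linearIndepOn {p | p.IsPermitted}
  exact hsingle.congr fun p hp => (wordRepresentation_pathOf hp).symm

theorem arrOf_ne_zero (a : Q.A) : arrOf k Q a ≠ 0 :=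
  pathOf_ofArrow (k := k) a ▸ linearIndepOn_pathOf.ne_zero (Word.isPermitted_ofArrow a)

end WordRepresentation

/-! ### Nilpotency of positive length paths -/

section LengthFiltration

variable (k : Type) [Field k] (Q : GentleData)

/-- The `n`-th step of the filtration of `kQ/I` by path length, that is, the `n`-th power of the
ideal generated by the arrows. -/
noncomputable def lengthFiltration (n : ℕ) : Submodule k (GentleAlgebra k Q) :=
  Submodule.span k (pathOf k '' {p : Q.Word | n ≤ p.arrows.length})

variable {k Q}

theorem lengthFiltration_mul_le (m n : ℕ) :
    lengthFiltration k Q m * lengthFiltration k Q n ≤ lengthFiltration k Q (m + n) := by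
  rw [lengthFiltration, lengthFiltration, Submodule.span_mul_span, Submodule.span_le]
  rintro _ ⟨_, ⟨p, hp, rfl⟩, _, ⟨q, hq, rfl⟩, rfl⟩
  change pathOf k p * pathOf k q ∈ _
  rw [pathOf_mul_pathOf]
  split_ifs
  · refine Submodule.subset_span ⟨_, ?_, rfl⟩
    simpa only [Set.mem_ofPred_eq, List.length_append] using add_le_add hp.out hq.out
  · exact zero_mem _

theorem pow_mem_lengthFiltration {x : GentleAlgebra k Q} (hx : x ∈ lengthFiltration k Q 1)
    (n : ℕ) : x ^ n ∈ lengthFiltration k Q n := by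
  induction n with
  | zero =>
    have htop : lengthFiltration k Q 0 = ⊤ := by
      simp [lengthFiltration, span_range_pathOf]
    simp [htop]
  | succ n ih =>
    rw [pow_succ]
    exact lengthFiltration_mul_le n 1 (Submodule.mul_mem_mul ih hx)

theorem exists_lengthFiltration_eq_bot (hQ : Q.HasBoundedPaths) :
    ∃ n, lengthFiltration k Q n = ⊥ := by
  obtain ⟨N, hN⟩ := hQ
  refine ⟨N + 1, Submodule.span_eq_bot.mpr ?_⟩
  rintro _ ⟨p, hp, rfl⟩
  exact pathOf_eq_zero fun hperm => (Nat.lt_of_succ_le hp.out).not_ge (hN _ hperm.1)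

theorem isNilpotent_of_mem_lengthFiltration_one (hQ : Q.HasBoundedPaths) {x : GentleAlgebra k Q}
    (hx : x ∈ lengthFiltration k Q 1) : IsNilpotent x := by
  obtain ⟨n, hn⟩ := exists_lengthFiltration_eq_bot (k := k) hQ
  exact ⟨n, (Submodule.mem_bot k).mp (hn ▸ pow_mem_lengthFiltration hx n)⟩

theorem idemOf_mul_sub_augmentation_smul_mem (v : Q.V) (x : GentleAlgebra k Q) :
    idemOf k Q v * x - augmentation k v x • idemOf k Q v ∈ lengthFiltration k Q 1 := by
  have hx : x ∈ Submodule.span k (Set.range (pathOf k (Q := Q))) := by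
    rw [span_range_pathOf]
    exact Submodule.mem_top
  induction hx using Submodule.span_induction with
  | mem _ hx =>
    obtain ⟨p, rfl⟩ := hx
    cases p using Word.induction with
    | nil w =>
      rw [pathOf_nil, idemOf_mul_idemOf, augmentation_idemOf]
      split_ifs <;> simp_all
    | append a p =>
      rw [idemOf_mul_pathOf, pathOf_ofArrow_append, map_mul, augmentation_arrOf, zero_mul,
        zero_smul, sub_zero, ← pathOf_ofArrow_append]
      split_ifs
      · exact Submodule.subset_span ⟨_, Nat.succ_le_succ (Nat.zero_le _), rfl⟩
      · exact zero_mem _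
  | zero => simp
  | add x y _ _ hx hy =>
    rw [mul_add, map_add, add_smul, add_sub_add_comm]
    exact add_mem hx hy
  | smul c x _ hx =>
    rw [mul_smul_comm, map_smul, smul_assoc, ← smul_sub]
    exact Submodule.smul_mem _ c hx

theorem exists_isGreatest_Iio_top_vertexModule (hQ : Q.HasBoundedPaths) (v : Q.V) :
    ∃ K : Submodule (GentleAlgebra k Q)ᵐᵒᵖ (vertexModule k Q v), IsGreatest (Set.Iio ⊤) K := by
  refine ⟨_, isGreatest_Iio_top_rightKer_submoduleOf (ε := (augmentation k v).toRingHom)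
    (fun c => ⟨algebraMap k _ c, AlgHom.commutes _ c⟩) (isIdempotentElem_idemOf v)
    ((augmentation_idemOf v v).trans (if_pos rfl)) fun x hx hεx => ?_⟩
  have hmem := idemOf_mul_sub_augmentation_smul_mem v x
  rw [hx, show augmentation k v x = 0 from hεx, zero_smul, sub_zero] at hmem
  exact isNilpotent_of_mem_lengthFiltration_one hQ hmem

end LengthFiltration

/-! ### Annihilators of arrows -/

section Annihilators

variable {k : Type} [Field k] {Q : GentleData} {a b : Q.A}

theorem linearIndepOn_arrOf_mul_pathOf (a : Q.A) :
    LinearIndepOn k (fun p => arrOf k Q a * pathOf k p)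
      {p : Q.Word | ((Word.ofArrow a).append p).IsPermitted} := by
  have hinj : Function.Injective (Word.ofArrow a).append := fun p q h => by
    simpa [Word.ext_iff] using h
  simp only [← pathOf_ofArrow_append]
  exact (linearIndepOn_pathOf.mono (Set.image_preimage_subset _ _)).comp_of_image hinj.injOn

theorem exists_arrOf_mul_eq_of_arrOf_mul_eq_zero
    (hb : ∀ c, Q.tgt a = Q.src c → Q.rel a c → c = b) {x : GentleAlgebra k Q}
    (hx : idemOf k Q (Q.tgt a) * x = x) (hax : arrOf k Q a * x = 0) :
    ∃ y, arrOf k Q b * y = x := by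
  have hker := ker_le_span_image_compl span_range_pathOf (LinearMap.mulLeft k (arrOf k Q a))
    (linearIndepOn_arrOf_mul_pathOf a) (fun p hp => by
      rw [LinearMap.mulLeft_apply, ← pathOf_ofArrow_append]
      exact pathOf_eq_zero hp) hax
  suffices h : Submodule.span k (pathOf k ''
        {p : Q.Word | ((Word.ofArrow a).append p).IsPermitted}ᶜ)
      ≤ (LinearMap.range (LinearMap.mulLeft k (arrOf k Q b))).comap
        (LinearMap.mulLeft k (idemOf k Q (Q.tgt a))) by
    simpa [hx] using h hker
  rw [Submodule.span_le]
  rintro _ ⟨p, hp, rfl⟩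
  change idemOf k Q (Q.tgt a) * pathOf k p ∈ LinearMap.range _
  rw [idemOf_mul_pathOf]
  split_ifs with hfirst
  swap
  · exact zero_mem _
  by_cases hperm : p.IsPermitted
  swap
  · rw [pathOf_eq_zero hperm]
    exact zero_mem _
  obtain ⟨_, ⟨⟩, c, hc, hac⟩ := Word.exists_rel_of_not_isPermitted_append
    (Word.isPermitted_ofArrow a) hperm hfirst hp
  obtain rfl := hb c (hfirst.trans (Word.first_eq_src hc)) hac
  exact exists_arrOf_mul_eq_pathOf hc

theorem linearIndepOn_pathOf_mul_arrOf (b : Q.A) :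
    LinearIndepOn k (fun p => pathOf k p * arrOf k Q b)
      {p : Q.Word | p.last = Q.src b ∧ (p.append (.ofArrow b)).IsPermitted} := by
  have hinj : Set.InjOn (fun p : Q.Word => p.append (.ofArrow b))
      {p | p.last = Q.src b ∧ (p.append (.ofArrow b)).IsPermitted} := fun p hp q hq h => by
    simp_all [Word.ext_iff]
  have hperm : LinearIndepOn k (pathOf k ∘ fun p : Q.Word => p.append (.ofArrow b))
      {p | p.last = Q.src b ∧ (p.append (.ofArrow b)).IsPermitted} :=
    (linearIndepOn_pathOf.mono (by rintro _ ⟨p, hp, rfl⟩; exact hp.2)).comp_of_image hinj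
  refine hperm.congr fun p hp => ?_
  rw [Function.comp_apply, pathOf_append hp.1, pathOf_ofArrow]

theorem pathOf_mul_arrOf_eq_zero {p : Q.Word}
    (hp : ¬ (p.last = Q.src b ∧ (p.append (.ofArrow b)).IsPermitted)) :
    pathOf k p * arrOf k Q b = 0 := by
  rw [← pathOf_ofArrow, pathOf_mul_pathOf]
  split_ifs with h
  · exact pathOf_eq_zero fun hperm => hp ⟨h, hperm⟩
  · rfl

theorem exists_mul_arrOf_eq_of_mul_arrOf_eq_zero
    (ha : ∀ c, Q.tgt c = Q.src b → Q.rel c b → c = a) {x : GentleAlgebra k Q}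
    (hx : x * idemOf k Q (Q.src b) = x) (hxb : x * arrOf k Q b = 0) :
    ∃ y, y * arrOf k Q a = x := by
  have hker := ker_le_span_image_compl span_range_pathOf (LinearMap.mulRight k (arrOf k Q b))
    (linearIndepOn_pathOf_mul_arrOf b) (fun p hp => pathOf_mul_arrOf_eq_zero hp) hxb
  suffices h : Submodule.span k (pathOf k ''
        {p : Q.Word | p.last = Q.src b ∧ (p.append (.ofArrow b)).IsPermitted}ᶜ)
      ≤ (LinearMap.range (LinearMap.mulRight k (arrOf k Q a))).comap
        (LinearMap.mulRight k (idemOf k Q (Q.src b))) by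
    simpa [hx] using h hker
  rw [Submodule.span_le]
  rintro _ ⟨p, hp, rfl⟩
  change pathOf k p * idemOf k Q (Q.src b) ∈ LinearMap.range _
  rw [← pathOf_nil, pathOf_mul_pathOf]
  split_ifs with hlast
  swap
  · exact zero_mem _
  by_cases hperm : p.IsPermitted
  swap
  · rw [pathOf_append hlast, pathOf_eq_zero hperm, zero_mul]
    exact zero_mem _
  obtain ⟨c, hc, _, ⟨⟩, hcb⟩ := Word.exists_rel_of_not_isPermitted_append hperm
    (Word.isPermitted_ofArrow b) hlast fun h => hp ⟨hlast, h⟩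
  have hcb' : Q.tgt c = Q.src b := (hperm.2 c hc).trans hlast
  obtain rfl := ha c hcb' hcb
  obtain ⟨y, hy⟩ := exists_mul_arrOf_eq_pathOf (k := k) hc (hperm.2 c hc)
  refine ⟨y, ?_⟩
  rw [LinearMap.mulRight_apply, pathOf_append hlast, ← hy, pathOf_nil, ← hcb', mul_assoc,
    arrOf_mul_idemOf_tgt]

theorem isPerfectPair_arrOf (hab : Q.tgt a = Q.src b) (hrel : Q.rel a b)
    (ha : ∀ c, Q.tgt c = Q.src b → Q.rel c b → c = a)
    (hb : ∀ c, Q.tgt a = Q.src c → Q.rel a c → c = b) :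
    IsPerfectPair (idemOf k Q (Q.tgt a)) (arrOf k Q a) (arrOf k Q b) where
  mul_eq_zero := arrOf_mul_arrOf_of_rel hrel
  exists_right _ := exists_arrOf_mul_eq_of_arrOf_mul_eq_zero hb
  exists_left _ := hab ▸ exists_mul_arrOf_eq_of_mul_arrOf_eq_zero ha

end Annihilators

section ArrowModule

variable {k : Type} [Field k] {Q : GentleData}

theorem exists_surjective_vertexModule_arrowModule (a : Q.A) :
    ∃ f : vertexModule k Q (Q.tgt a) →ₗ[(GentleAlgebra k Q)ᵐᵒᵖ] arrowModule k Q a,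
      Function.Surjective f := by
  have hmap : (vertexModule k Q (Q.tgt a)).map
      (LinearMap.mulLeft (GentleAlgebra k Q)ᵐᵒᵖ (arrOf k Q a)) = arrowModule k Q a := by
    rw [vertexModule, Submodule.map_span, Set.image_singleton, LinearMap.mulLeft_apply,
      arrOf_mul_idemOf_tgt, arrowModule]
  rw [← hmap]
  exact ⟨_, LinearMap.submoduleMap_surjective _ _⟩

instance nontrivial_arrowModule (a : Q.A) : Nontrivial (arrowModule k Q a) :=
  nontrivial_of_ne ⟨arrOf k Q a, self_mem_principalRightIdeal _⟩ 0 fun h =>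
    arrOf_ne_zero a (congrArg Subtype.val h)

theorem indecomposableModule_arrowModule (hQ : Q.HasBoundedPaths) (a : Q.A) :
    IndecomposableModule (GentleAlgebra k Q)ᵐᵒᵖ (arrowModule k Q a) := by
  obtain ⟨_, hK⟩ := exists_isGreatest_Iio_top_vertexModule (k := k) hQ (Q.tgt a)
  obtain ⟨_, hf⟩ := exists_surjective_vertexModule_arrowModule (k := k) a
  exact .of_surjective (R := (GentleAlgebra k Q)ᵐᵒᵖ) (P := vertexModule k Q (Q.tgt a)) hK hf

theorem nonempty_topMod_arrowModule_equiv_simpleAt (hQ : Q.HasBoundedPaths) (a : Q.A) :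
    Nonempty (topMod (GentleAlgebra k Q)ᵐᵒᵖ (arrowModule k Q a)
      ≃ₗ[(GentleAlgebra k Q)ᵐᵒᵖ] SimpleAt k Q (Q.tgt a)) := by
  obtain ⟨_, hK⟩ := exists_isGreatest_Iio_top_vertexModule (k := k) hQ (Q.tgt a)
  obtain ⟨_, hf⟩ := exists_surjective_vertexModule_arrowModule (k := k) a
  exact nonempty_topMod_equiv_of_surjective hK hf

theorem isGorensteinProjective_arrowModule
    (hin : ∀ b, {a | Q.tgt a = Q.src b ∧ Q.rel a b}.Subsingleton)
    (hout : ∀ a, {b | Q.src b = Q.tgt a ∧ Q.rel a b}.Subsingleton) {ℓ : ℕ} {c : ZMod ℓ → Q.A}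
    (hc : IsOCFCycle Q c) (i : ZMod ℓ) :
    IsGorensteinProjective (GentleAlgebra k Q)ᵐᵒᵖ (arrowModule k Q (c i)) := by
  -- The differential of the complex raises degrees, whereas `c` is traversed backwards.
  let g (n : ℤ) : Q.A := c (i - (n + 1 : ℤ))
  have hg (n : ℤ) : Q.tgt (g (n + 1)) = Q.src (g n) ∧ Q.rel (g (n + 1)) (g n) := by
    have hn : i - ((n + 1 : ℤ) : ZMod ℓ) = i - ((n + 1 + 1 : ℤ) : ZMod ℓ) + 1 := by
      push_cast
      ring
    simpa only [g, hn] using hc (i - ((n + 1 + 1 : ℤ) : ZMod ℓ))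
  have hi : g (-1) = c i := by simp [g]
  rw [← hi]
  refine isGorensteinProjective_principalRightIdeal (e := fun n => idemOf k Q (Q.tgt (g n)))
    (a := fun n => arrOf k Q (g n)) (fun _ => isIdempotentElem_idemOf _)
    (fun _ => arrOf_mul_idemOf_tgt _) (fun n => (hg n).1 ▸ idemOf_src_mul_arrOf _) fun n => ?_
  exact isPerfectPair_arrOf (hg n).1 (hg n).2 (fun _ h h' => hin _ ⟨h, h'⟩ (hg n))
    fun _ h h' => hout _ ⟨h.symm, h'⟩ ⟨(hg n).1.symm, (hg n).2⟩

end ArrowModule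

end GentleAlgebra

open GentleAlgebra in
theorem arrowModule_indecomposable_gorensteinProjective_top_general
    (k : Type) [Field k] (Q : GentleData) (hQ : Q.HasBoundedPaths)
    (hin : ∀ b, {a | Q.tgt a = Q.src b ∧ Q.rel a b}.Subsingleton)
    (hout : ∀ a, {b | Q.src b = Q.tgt a ∧ Q.rel a b}.Subsingleton) :
    (∀ a : Q.A, OnOCFCycle Q a →
      IndecomposableModule (GentleAlgebra k Q)ᵐᵒᵖ ↥(arrowModule k Q a) ∧
      IsGorensteinProjective (GentleAlgebra k Q)ᵐᵒᵖ ↥(arrowModule k Q a) ∧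
      Nonempty (topMod (GentleAlgebra k Q)ᵐᵒᵖ ↥(arrowModule k Q a)
        ≃ₗ[(GentleAlgebra k Q)ᵐᵒᵖ] SimpleAt k Q (Q.tgt a))) ∧
    (∀ (m n : ℕ), 1 ≤ m → 1 ≤ n → ∀ (c : ZMod m → Q.A) (c' : ZMod n → Q.A),
      IsOCFCycle Q c → IsOCFCycle Q c' → ∀ (h : ZMod m) (h' : ZMod n),
      Q.tgt (c h) = Q.tgt (c' h') →
      (IndecomposableModule (GentleAlgebra k Q)ᵐᵒᵖ ↥(arrowModule k Q (c h)) ∧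
       IsGorensteinProjective (GentleAlgebra k Q)ᵐᵒᵖ ↥(arrowModule k Q (c h)) ∧
       IndecomposableModule (GentleAlgebra k Q)ᵐᵒᵖ ↥(arrowModule k Q (c' h')) ∧
       IsGorensteinProjective (GentleAlgebra k Q)ᵐᵒᵖ ↥(arrowModule k Q (c' h')) ∧
       Nonempty (topMod (GentleAlgebra k Q)ᵐᵒᵖ ↥(arrowModule k Q (c h))
         ≃ₗ[(GentleAlgebra k Q)ᵐᵒᵖ] SimpleAt k Q (Q.tgt (c h))) ∧
       Nonempty (topMod (GentleAlgebra k Q)ᵐᵒᵖ ↥(arrowModule k Q (c' h'))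
         ≃ₗ[(GentleAlgebra k Q)ᵐᵒᵖ] SimpleAt k Q (Q.tgt (c h))))) := by
  have hindec := indecomposableModule_arrowModule (k := k) hQ
  have htop := nonempty_topMod_arrowModule_equiv_simpleAt (k := k) hQ
  constructor
  · rintro _ ⟨ℓ, -, c, hc, i, rfl⟩
    exact ⟨hindec _, isGorensteinProjective_arrowModule hin hout hc i, htop _⟩
  · intro m n _ _ c c' hc hc' h h' hv
    exact ⟨hindec _, isGorensteinProjective_arrowModule hin hout hc h, hindec _,
      isGorensteinProjective_arrowModule hin hout hc' h', htop _, hv ▸ htop _⟩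

/-- For an arrow `α` with sink `v` lying on an oriented cycle
with full relations of the gentle algebra `A = kQ/I`, the module `αA` is an
indecomposable Gorenstein projective module with top isomorphic to the simple
module `S(v)`. In particular two oriented cycles with full relations sharing a
common vertex `v₀` give indecomposable Gorenstein projective modules
`α_h A` and `β_ħ A` with `top(α_h A) ≅ top(β_ħ A) ≅ S(v₀)`. -/
theorem arrowModule_indecomposable_gorensteinProjective_top
    (k : Type) [Field k] [IsAlgClosed k] (Q : GentleData) (hQ : IsGentle Q) :
    (∀ a : Q.A, OnOCFCycle Q a →
      IndecomposableModule (GentleAlgebra k Q)ᵐᵒᵖ ↥(arrowModule k Q a) ∧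
      IsGorensteinProjective (GentleAlgebra k Q)ᵐᵒᵖ ↥(arrowModule k Q a) ∧
      Nonempty (topMod (GentleAlgebra k Q)ᵐᵒᵖ ↥(arrowModule k Q a)
        ≃ₗ[(GentleAlgebra k Q)ᵐᵒᵖ] SimpleAt k Q (Q.tgt a))) ∧
    (∀ (m n : ℕ), 1 ≤ m → 1 ≤ n → ∀ (c : ZMod m → Q.A) (c' : ZMod n → Q.A),
      IsOCFCycle Q c → IsOCFCycle Q c' → ∀ (h : ZMod m) (h' : ZMod n),
      Q.tgt (c h) = Q.tgt (c' h') →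
      (IndecomposableModule (GentleAlgebra k Q)ᵐᵒᵖ ↥(arrowModule k Q (c h)) ∧
       IsGorensteinProjective (GentleAlgebra k Q)ᵐᵒᵖ ↥(arrowModule k Q (c h)) ∧
       IndecomposableModule (GentleAlgebra k Q)ᵐᵒᵖ ↥(arrowModule k Q (c' h')) ∧
       IsGorensteinProjective (GentleAlgebra k Q)ᵐᵒᵖ ↥(arrowModule k Q (c' h')) ∧
       Nonempty (topMod (GentleAlgebra k Q)ᵐᵒᵖ ↥(arrowModule k Q (c h))
         ≃ₗ[(GentleAlgebra k Q)ᵐᵒᵖ] SimpleAt k Q (Q.tgt (c h))) ∧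
       Nonempty (topMod (GentleAlgebra k Q)ᵐᵒᵖ ↥(arrowModule k Q (c' h'))
         ≃ₗ[(GentleAlgebra k Q)ᵐᵒᵖ] SimpleAt k Q (Q.tgt (c h))))) := by
  exact arrowModule_indecomposable_gorensteinProjective_top_general k Q hQ.hasBoundedPaths
    (fun b => Set.ncard_le_one_iff_subsingleton.mp (hQ.2.2.2.2.1 b))
    fun a => Set.ncard_le_one_iff_subsingleton.mp (hQ.2.2.2.2.2.2.1 a)
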